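/- Suppose I is a proper nonzero non-maximal radical ideal of S, and set R = k + I. Then the Krull dimension of S/I is at least 1 if and only if R is nonnoetherian. -/

import Mathlib

/-!
Write `R = k + I`. Both conditions are decided by whether `S` is a finite `R`-module.

* `S` is finite over `R` iff `S/I` is finite over `k`, because `I ⊆ R` and `R/I` is the image of `k`
  (`finite_kPlus_of_finite_quotient`, `finite_quotient_of_finite_kPlus`). As `S/I` is a finitely
  generated `k`-algebra, the latter means that `S/I` has Krull dimension at most zero.
* If `R` is noetherian and `0 ≠ a ∈ I`, then `S ≅ aS ⊆ I ⊆ R` as `R`-modules, so `S` is finite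
  over `R` (`finite_of_isNoetherianRing_kPlus`).
* If `S` is finite over `R`, then `R` is a finitely generated `k`-algebra by the Artin--Tate lemma,
  hence noetherian (`isNoetherianRing_kPlus_of_finite`).
-/

/-- The subring `k + I = {α·1 + b : α ∈ k, b ∈ I}` of `S`, as a `k`-subalgebra. -/
def kPlus (k : Type*) {S : Type*} [CommSemiring k] [CommRing S] [Algebra k S]
    (I : Ideal S) : Subalgebra k S where
  carrier := {s | ∃ (α : k) (b : S), b ∈ I ∧ s = algebraMap k S α + b}
  algebraMap_mem' := fun α => ⟨α, 0, I.zero_mem, by ring⟩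
  add_mem' := by
    rintro x y ⟨α, b, hb, rfl⟩ ⟨β, c, hc, rfl⟩
    exact ⟨α + β, b + c, I.add_mem hb hc, by rw [map_add]; ring⟩
  mul_mem' := by
    rintro x y ⟨α, b, hb, rfl⟩ ⟨β, c, hc, rfl⟩
    refine ⟨α * β, algebraMap k S α * c + algebraMap k S β * b + b * c, ?_, by rw [map_mul]; ring⟩
    exact I.add_mem (I.add_mem (I.mul_mem_left _ hc) (I.mul_mem_left _ hb)) (I.mul_mem_left _ hc)


lemma mem_kPlus_of_mem (k : Type*) {S : Type*} [CommSemiring k] [CommRing S] [Algebra k S]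
    {I : Ideal S} {b : S} (hb : b ∈ I) : b ∈ kPlus k I :=
  ⟨0, b, hb, by simp⟩

section

variable {k S : Type*} [Field k] [CommRing S] [Algebra k S] {I : Ideal S}

/-- Lifts of `k`-generators of `S/I`, together with `1`, generate `S` over `k + I`. -/
lemma finite_kPlus_of_finite_quotient (h : Module.Finite k (S ⧸ I)) :
    Module.Finite (kPlus k I) S := by
  classical
  obtain ⟨T, hT⟩ := h.fg_top
  let g : S ⧸ I → S := Function.surjInv (Ideal.Quotient.mk_surjective (I := I))
  have hg : ∀ x, Ideal.Quotient.mk I (g x) = x :=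
    Function.surjInv_eq (Ideal.Quotient.mk_surjective (I := I))
  refine ⟨⟨insert 1 (T.image g), eq_top_iff.mpr fun s _ => ?_⟩⟩
  set N := Submodule.span (kPlus k I) ((insert 1 (T.image g) : Finset S) : Set S)
  have key : ∀ x ∈ Submodule.span k (T : Set (S ⧸ I)), ∃ n ∈ N, Ideal.Quotient.mk I n = x := by
    intro x hx
    induction hx using Submodule.span_induction with
    | mem x hx =>
      exact ⟨g x, Submodule.subset_span (by
        simp only [Finset.coe_insert, Finset.coe_image]
        exact Or.inr ⟨x, hx, rfl⟩), hg x⟩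
    | zero => exact ⟨0, N.zero_mem, map_zero _⟩
    | add x y _ _ ihx ihy =>
      obtain ⟨n, hn, rfl⟩ := ihx
      obtain ⟨m, hm, rfl⟩ := ihy
      exact ⟨n + m, N.add_mem hn hm, map_add _ _ _⟩
    | smul c x _ ih =>
      obtain ⟨n, hn, rfl⟩ := ih
      refine ⟨algebraMap k (kPlus k I) c • n, N.smul_mem _ hn, ?_⟩
      rw [algebraMap_smul, Algebra.smul_def, map_mul, Algebra.smul_def]
      rfl
  obtain ⟨n, hn, hns⟩ := key (Ideal.Quotient.mk I s) (hT ▸ Submodule.mem_top)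
  have hI : s - n ∈ I := Ideal.Quotient.eq.mp hns.symm
  have h1 : (1 : S) ∈ N := Submodule.subset_span (by simp)
  have h2 : s - n ∈ N := by
    have := N.smul_mem (⟨s - n, mem_kPlus_of_mem k hI⟩ : kPlus k I) h1
    simpa [Subalgebra.smul_def] using this
  simpa using N.add_mem h2 hn

/-- Elements of `k + I` act on `S/I` through scalars of `k`, so generators of `S` over `k + I`
reduce to `k`-generators of `S/I`. -/
lemma finite_quotient_of_finite_kPlus (h : Module.Finite (kPlus k I) S) :
    Module.Finite k (S ⧸ I) := by
  classical
  obtain ⟨T, hT⟩ := h.fg_top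
  refine ⟨⟨T.image (Ideal.Quotient.mk I), eq_top_iff.mpr fun x _ => ?_⟩⟩
  obtain ⟨s, rfl⟩ := Ideal.Quotient.mk_surjective x
  have hs : s ∈ Submodule.span (kPlus k I) (T : Set S) := hT ▸ Submodule.mem_top
  induction hs using Submodule.span_induction with
  | mem s hs => exact Submodule.subset_span (by simpa using ⟨s, hs, rfl⟩)
  | zero => simp
  | add x y _ _ ihx ihy =>
    rw [map_add]
    exact Submodule.add_mem _ (ihx trivial) (ihy trivial)
  | smul c x _ ih =>
    obtain ⟨c, α, b, hb, rfl⟩ := c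
    have : Ideal.Quotient.mk I ((⟨algebraMap k S α + b, α, b, hb, rfl⟩ : kPlus k I) • x)
        = α • Ideal.Quotient.mk I x := by
      rw [Subalgebra.smul_def, smul_eq_mul, map_mul, map_add,
        Ideal.Quotient.eq_zero_iff_mem.mpr hb, add_zero, Algebra.smul_def]
      rfl
    rw [this]
    exact Submodule.smul_mem _ _ (ih trivial)

/-- Multiplication by a nonzero `a ∈ I` embeds `S` into the noetherian module `k + I`. -/
lemma finite_of_isNoetherianRing_kPlus [IsDomain S] (hnz : I ≠ ⊥)
    (h : IsNoetherianRing (kPlus k I)) : Module.Finite (kPlus k I) S := by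
  obtain ⟨a, ha, ha0⟩ := Submodule.exists_mem_ne_zero_of_ne_bot hnz
  let f : S →ₗ[kPlus k I] kPlus k I :=
    { toFun := fun s => ⟨s * a, mem_kPlus_of_mem k (I.mul_mem_left s ha)⟩
      map_add' := fun x y => Subtype.ext (add_mul x y a)
      map_smul' := fun c x => Subtype.ext (mul_assoc (c : S) x a) }
  have hf : Function.Injective f := fun x y hxy =>
    mul_right_cancel₀ ha0 (congrArg Subtype.val hxy)
  have := isNoetherian_of_injective f hf
  infer_instance

lemma isNoetherianRing_kPlus_of_finite [Algebra.FiniteType k S]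
    (h : Module.Finite (kPlus k I) S) : IsNoetherianRing (kPlus k I) := by
  have : Algebra.FiniteType k (kPlus k I) :=
    ⟨fg_of_fg_of_fg k (kPlus k I) S Algebra.FiniteType.out h.fg_top Subtype.val_injective⟩
  exact Algebra.FiniteType.isNoetherianRing k _

end

/-- If `I` is a proper nonzero non-maximal radical ideal of `S` and
`R = k + I`, then `dim S/I ≥ 1` iff `R` is nonnoetherian. -/
theorem stmt17 (k S : Type*) [Field k] [IsAlgClosed k] [CommRing S] [IsDomain S]
    [Algebra k S] [Algebra.FiniteType k S]
    (I : Ideal S) (hproper : I ≠ ⊤) (hnz : I ≠ ⊥) (hnmax : ¬ I.IsMaximal)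
    (hrad : I.IsRadical) :
    1 ≤ ringKrullDim (S ⧸ I) ↔ ¬ IsNoetherianRing (kPlus k I) := by
  have hdim : 1 ≤ ringKrullDim (S ⧸ I) ↔ ¬ Module.Finite k (S ⧸ I) := by
    rw [Module.finite_iff_krullDimLE_zero, Ring.krullDimLE_iff, not_le, Nat.cast_zero]
    simpa using ENat.WithBot.add_one_le_iff (n := 0) (m := ringKrullDim (S ⧸ I))
  rw [hdim]
  exact not_congr
    ⟨fun h => isNoetherianRing_kPlus_of_finite (finite_kPlus_of_finite_quotient h),
      fun h => finite_quotient_of_finite_kPlus (finite_of_isNoetherianRing_kPlus hnz h)⟩
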